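/- arXiv:1402.1122 — 2 statements merged into one kernel-verified Lean document; each statement's English description precedes it below -/
import Mathlib

section
/- For all natural numbers k ≥ 1, J ≥ 1, and every complex number t, one has (1-t)^k · ∑_{j_1+⋯+j_k ≤ J, j_r ≥ 0} t^{j_1+⋯+j_k} = 1 - t^{J+1} · ∑_{l=0}^{k-1} C(J+l, l) (1-t)^l, where C denotes the binomial coefficient. -/
/-!
Exactly `Nat.multichoose k m` tuples of `k` natural numbers have sum `m`, so the sum on the left is
`∑ m ≤ J, k.multichoose m * t ^ m`. By Pascal's rule for `Nat.multichoose`, multiplying this sum by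
`1 - t` turns `k + 1` into `k` at the cost of the boundary term `(J + k).choose k * t ^ (J + 1)`.
Iterating down to `k = 0`, where only `m = 0` contributes, collects the sum on the right.
-/

open Finset

section Counting

variable {ι : Type*} [DecidableEq ι]

theorem card_piAntidiag_nat_eq_multichoose (s : Finset ι) (n : ℕ) :
    #(piAntidiag s n) = (#s).multichoose n := by
  rw [← card_finsuppAntidiag_nat_eq_multichoose, finsuppAntidiag, card_map, card_attach]

variable [Fintype ι]

theorem filter_sum_le_filter_sum_eq {m J : ℕ} (hm : m ≤ J) :
    {j ∈ {j ∈ Fintype.piFinset fun _ : ι ↦ range (J + 1) | ∑ i, j i ≤ J} | ∑ i, j i = m} =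
      piAntidiag univ m := by
  ext j
  have coord_le (i : ι) : j i ≤ ∑ i, j i := single_le_sum_of_canonicallyOrdered (mem_univ i)
  simp only [mem_filter, Fintype.mem_piFinset, mem_range, mem_piAntidiag, mem_univ, implies_true,
    and_true, and_iff_right_iff_imp]
  rintro rfl
  exact ⟨fun i ↦ Nat.lt_succ_of_le ((coord_le i).trans hm), hm⟩

theorem sum_filter_sum_le_comp_sum {M : Type*} [AddCommMonoid M] (J : ℕ) (f : ℕ → M) :
    ∑ j ∈ Fintype.piFinset fun _ : ι ↦ range (J + 1) with ∑ i, j i ≤ J, f (∑ i, j i) =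
      ∑ m ∈ range (J + 1), (Fintype.card ι).multichoose m • f m := by
  have sum_mem_range : ∀ j ∈ {j ∈ Fintype.piFinset fun _ : ι ↦ range (J + 1) | ∑ i, j i ≤ J},
      ∑ i, j i ∈ range (J + 1) :=
    fun j hj ↦ mem_range_succ_iff.mpr (mem_filter.mp hj).2
  rw [← sum_fiberwise_of_maps_to' sum_mem_range]
  refine sum_congr rfl fun m hm ↦ ?_
  rw [sum_const, filter_sum_le_filter_sum_eq (mem_range_succ_iff.mp hm),
    card_piAntidiag_nat_eq_multichoose, card_univ]

end Counting

theorem multichoose_succ_eq_choose (k n : ℕ) : (k + 1).multichoose n = (n + k).choose k := by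
  rw [Nat.multichoose_eq, Nat.add_right_comm, Nat.add_sub_cancel, Nat.add_comm, Nat.choose_symm_add]

section Ring

variable {R : Type*} [Ring R]

theorem one_sub_mul_sum_multichoose_succ (k J : ℕ) (t : R) :
    (1 - t) * ∑ m ∈ range (J + 1), (k + 1).multichoose m • t ^ m =
      ∑ m ∈ range (J + 1), k.multichoose m • t ^ m - (k + 1).multichoose J • t ^ (J + 1) := by
  induction J with
  | zero => simp
  | succ J ih =>
    rw [sum_range_succ, mul_add, ih, sum_range_succ _ (J + 1), mul_smul_comm, sub_mul, one_mul,
      ← pow_succ', smul_sub, Nat.multichoose_succ_succ, add_smul]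
    abel

theorem one_sub_pow_mul_sum_multichoose (k J : ℕ) (t : R) :
    (1 - t) ^ k * ∑ m ∈ range (J + 1), k.multichoose m • t ^ m =
      1 - t ^ (J + 1) * ∑ l ∈ range k, ((J + l).choose l : R) * (1 - t) ^ l := by
  induction k with
  | zero => simp [sum_range_succ']
  | succ k ih =>
    have boundary_term : (1 - t) ^ k * (k + 1).multichoose J • t ^ (J + 1) =
        t ^ (J + 1) * ((J + k).choose k * (1 - t) ^ k) := by
      have commute : Commute ((1 - t) ^ k) (t ^ (J + 1)) :=
        ((Commute.one_left t).sub_left (Commute.refl t)).pow_pow k (J + 1)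
      rw [multichoose_succ_eq_choose, mul_smul_comm, commute.eq, ← mul_smul_comm, nsmul_eq_mul]
    rw [pow_succ, mul_assoc, one_sub_mul_sum_multichoose_succ, mul_sub, ih, boundary_term,
      sum_range_succ _ k, mul_add, sub_sub]

theorem stmt_0_general {ι : Type*} [Fintype ι] [DecidableEq ι] (J : ℕ) (t : R) :
    (1 - t) ^ Fintype.card ι *
      ∑ j ∈ Fintype.piFinset fun _ : ι ↦ range (J + 1) with ∑ i, j i ≤ J, t ^ (∑ i, j i) =
    1 - t ^ (J + 1) * ∑ l ∈ range (Fintype.card ι), ((J + l).choose l : R) * (1 - t) ^ l := by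
  rw [sum_filter_sum_le_comp_sum J (t ^ ·), one_sub_pow_mul_sum_multichoose]

end Ring

/-- For all natural numbers `k ≥ 1`, `J ≥ 1` and every complex `t`,
`(1-t)^k · ∑_{j₁+⋯+j_k ≤ J} t^{j₁+⋯+j_k} = 1 - t^{J+1} ∑_{l=0}^{k-1} C(J+l,l)(1-t)^l`. -/
theorem stmt_0 (k J : ℕ) (hk : 1 ≤ k) (hJ : 1 ≤ J) (t : ℂ) :
    (1 - t) ^ k *
      ∑ j ∈ (Fintype.piFinset fun _ : Fin k => Finset.range (J + 1)).filter
          (fun j => ∑ i, j i ≤ J), t ^ (∑ i, j i) =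
    1 - t ^ (J + 1) * ∑ l ∈ Finset.range k, ((J + l).choose l : ℂ) * (1 - t) ^ l := by
  simpa only [Fintype.card_fin] using stmt_0_general (ι := Fin k) J t
end

section
/- Let d ≥ 1, k ≥ 1 be integers, q a positive integer, a an integer coprime to q, and S_k(q,a) = ∑_{x_1=1}^q ⋯ ∑_{x_k=1}^q e(a(x_1⋯x_k)^d/q). Then |q^{-k} S_k(q,a)| ≤ C(d,k) · τ(q)^{k-1} q^{-1/d}, where τ(q) is the number of divisors of q and C(d,k) depends only on d and k. -/
/-- `e(α) = exp(2πiα)`. -/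
noncomputable def eTwoPi (x : ℝ) : ℂ := Complex.exp (2 * Real.pi * Complex.I * x)

/-- The complete Weyl sum `S_k(q,a) = ∑_{x₁,…,x_k=1}^{q} e(a(x₁⋯x_k)^d/q)`. -/
noncomputable def SWeyl (d k : ℕ) (q : ℕ) (a : ℤ) : ℂ :=
  ∑ x ∈ Fintype.piFinset fun _ : Fin k => Finset.Icc 1 q,
    eTwoPi ((a : ℝ) * (∏ i, (x i : ℝ)) ^ d / q)

/-!
The heart of the matter is the Hardy–Littlewood bound `|∑ ψ(x ^ d)| ≤ C q ^ (1 - 1 / d)` for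
primitive additive characters `ψ` modulo `q`, with `C` depending on `d` only. For `q = p ^ l` with
`l` large compared to the exponent of `p` in `d`, the sum over units vanishes, because
`u ↦ u (1 + y N)` with `N ^ 2 = 0` rotates the terms by a nontrivial character of `y`. What
remains is a sum over multiples of `p`, which is `p ^ (d - 1)` times a sum of the same kind modulo
`p ^ (l - d)`, exactly the factor that preserves the bound. For small `l` the trivial bound costs
a constant depending on `p`, except when `p > d ^ 6`: there only `l = 1` is left over, and the bound
`(d - 1) √p` by Gauss sums needs no constant. Hence only finitely many primes contribute a
constant to the product over `p ∣ q` given by the Chinese remainder theorem.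

For `k` variables, fix `y = x₂ ⋯ x_k`; the sum over `x₁` is `≪ q ^ (1 - 1 / d) (q, y)`, and
`(q, y)` is at most the product of the `(q, x_i)`, each of which averages to at most `τ(q)`.
-/

namespace WeylSum

open Finset

/-! ### Power sums and Gauss sums -/

/-- The complete exponential sum `∑_{x ∈ R} ψ(x ^ d)` over `d`-th powers in a finite ring. -/
noncomputable def powerSum {R : Type*} [CommRing R] [Fintype R] (d : ℕ) (ψ : AddChar R ℂ) : ℂ :=
  ∑ x : R, ψ (x ^ d)

lemma norm_powerSum_le_card {R : Type*} [CommRing R] [Fintype R] (d : ℕ) (ψ : AddChar R ℂ) :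
    ‖powerSum d ψ‖ ≤ Fintype.card R :=
  (norm_sum_le _ _).trans (by simp)

section FiniteRing

variable {R : Type*} [CommRing R] [Fintype R] [DecidableEq R]

lemma sum_eq_sum_units_add_sum_not_isUnit (f : R → ℂ) :
    ∑ x, f x = ∑ u : Rˣ, f u + ∑ x with ¬IsUnit x, f x := by
  have sum_isUnit : ∑ u : Rˣ, f u = ∑ x with IsUnit x, f x :=
    sum_nbij (fun u : Rˣ ↦ (u : R)) (by simp) Units.val_injective.injOn
      (fun x hx ↦ by obtain ⟨u, rfl⟩ := (mem_filter.1 hx).2; simp) (by simp)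
  rw [sum_isUnit, sum_filter_add_sum_filter_not]

-- Substituting `u ↦ u (1 + y N)` multiplies the summand by `ψ (y * (d * N * u ^ d))`;
-- average over `y`.
lemma sum_units_pow_eq_zero {d : ℕ} {ψ : AddChar R ℂ} (hψ : ψ.IsPrimitive) {N : R}
    (hN : N ^ 2 = 0) (hdN : d * N ≠ 0) : ∑ u : Rˣ, ψ ((u : R) ^ d) = 0 := by
  have shift (y : R) : ∑ u : Rˣ, ψ ((u : R) ^ d) =
      ∑ u : Rˣ, ψ ((u : R) ^ d) * ψ (y * (d * N * (u : R) ^ d)) := by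
    have hyN : (y * N) ^ 2 = 0 := by rw [mul_pow, hN, mul_zero]
    obtain ⟨v, hv⟩ : IsUnit (1 + y * N) := IsNilpotent.isUnit_one_add ⟨2, hyN⟩
    obtain ⟨k, hk⟩ := Polynomial.powAddExpansion 1 (y * N) d
    rw [← Equiv.sum_comp (Equiv.mulRight v)]
    refine sum_congr rfl fun u _ ↦ ?_
    rw [← AddChar.map_add_eq_mul, Equiv.coe_mulRight, Units.val_mul, mul_pow, hv, hk, hyN]
    congr 1
    ring
  have orthogonality (u : Rˣ) : ∑ y : R, ψ (y * (d * N * (u : R) ^ d)) = 0 := by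
    rw [AddChar.sum_mulShift _ hψ, if_neg, Nat.cast_zero]
    rwa [(u.isUnit.pow d).mul_left_eq_zero]
  have average : (Fintype.card R : ℂ) * ∑ u : Rˣ, ψ ((u : R) ^ d) = 0 := calc
    _ = ∑ _y : R, ∑ u : Rˣ, ψ ((u : R) ^ d) := by rw [sum_const, nsmul_eq_mul, card_univ]
    _ = ∑ y : R, ∑ u : Rˣ, ψ ((u : R) ^ d) * ψ (y * (d * N * (u : R) ^ d)) :=
      sum_congr rfl fun y _ ↦ shift y
    _ = 0 := by
      rw [sum_comm]
      simp only [← mul_sum, orthogonality, mul_zero, sum_const_zero]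
  exact (mul_eq_zero.1 average).resolve_left (Nat.cast_ne_zero.2 Fintype.card_ne_zero)

lemma sum_units_mulChar (χ : MulChar R ℂ) [Decidable (χ = 1)] :
    ∑ u : Rˣ, χ u = if χ = 1 then (Fintype.card Rˣ : ℂ) else 0 := by
  split_ifs with hχ
  · simp [hχ]
  · have h := sum_eq_sum_units_add_sum_not_isUnit χ
    rw [MulChar.sum_eq_zero_of_ne_one hχ, sum_eq_zero (s := univ.filter _)
      fun x hx ↦ χ.map_nonunit (mem_filter.1 hx).2, add_zero] at h
    exact h.symm

variable [Fintype (MulChar R ℂ)]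

lemma sum_mulChar_apply (a : R) :
    ∑ χ : MulChar R ℂ, χ a = if a = 1 then (Fintype.card Rˣ : ℂ) else 0 := by
  split_ifs with ha
  · rw [← Nat.card_eq_fintype_card, ← MulChar.card_eq_card_units_of_hasEnoughRootsOfUnity R ℂ]
    simp [ha]
  · obtain ⟨χ, hχ⟩ := MulChar.exists_apply_ne_one_of_hasEnoughRootsOfUnity R ℂ ha
    refine eq_zero_of_mul_eq_self_left hχ ?_
    simpa only [mul_sum, ← MulChar.mul_apply] using
      (Group.mulLeft_bijective χ).sum_comp fun χ' : MulChar R ℂ ↦ χ' a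

lemma sum_mulChar_inv_mul_gaussSum (ψ : AddChar R ℂ) (u : Rˣ) :
    ∑ χ : MulChar R ℂ, χ ↑u⁻¹ * gaussSum χ ψ = Fintype.card Rˣ * ψ u := calc
  _ = ∑ x : R, (∑ χ : MulChar R ℂ, χ (↑u⁻¹ * x)) * ψ x := by
    simp only [gaussSum, mul_sum, sum_mul, map_mul, mul_assoc]
    exact sum_comm
  _ = Fintype.card Rˣ * ψ u := by
    simp only [sum_mulChar_apply, Units.inv_mul_eq_one, ite_mul, zero_mul, sum_ite_eq, mem_univ,
      if_true]

lemma sum_units_pow_eq_sum_gaussSum [DecidableEq (MulChar R ℂ)] (d : ℕ) (ψ : AddChar R ℂ) :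
    ∑ u : Rˣ, ψ ((u : R) ^ d) = ∑ χ : MulChar R ℂ with χ ^ d = 1, gaussSum χ ψ := by
  have sum_inv_pow (χ : MulChar R ℂ) :
      ∑ u : Rˣ, χ ↑(u ^ d)⁻¹ = if χ ^ d = 1 then (Fintype.card Rˣ : ℂ) else 0 := by
    rw [← sum_units_mulChar, ← Equiv.sum_comp (Equiv.inv Rˣ) fun u ↦ (χ ^ d) u]
    simp only [Equiv.inv_apply, MulChar.pow_apply_coe, ← map_pow, ← Units.val_pow_eq_pow_val,
      inv_pow]
  have hcard : (Fintype.card Rˣ : ℂ) ≠ 0 := Nat.cast_ne_zero.2 Fintype.card_ne_zero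
  refine mul_left_cancel₀ hcard ?_
  calc Fintype.card Rˣ * ∑ u : Rˣ, ψ ((u : R) ^ d)
      = ∑ χ : MulChar R ℂ, (∑ u : Rˣ, χ ↑(u ^ d)⁻¹) * gaussSum χ ψ := by
        simp only [mul_sum, sum_mul, ← Units.val_pow_eq_pow_val, ← sum_mulChar_inv_mul_gaussSum]
        exact sum_comm
    _ = Fintype.card Rˣ * ∑ χ : MulChar R ℂ with χ ^ d = 1, gaussSum χ ψ := by
        simp only [sum_inv_pow, ite_mul, zero_mul, ← sum_filter, mul_sum]

end FiniteRing

section FiniteField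

variable {F : Type*} [Field F]

lemma norm_gaussSum [Fintype F] {χ : MulChar F ℂ} (hχ : χ ≠ 1) {ψ : AddChar F ℂ}
    (hψ : ψ.IsPrimitive) : ‖gaussSum χ ψ‖ = √(Fintype.card F) := by
  have h : gaussSum χ ψ * star (gaussSum χ ψ) = Fintype.card F := by
    rw [star_gaussSum_eq, gaussSum_mul_gaussSum_eq_card hχ hψ]
  rw [Complex.star_def, Complex.mul_conj'] at h
  rw [eq_comm, Real.sqrt_eq_iff_eq_sq (Nat.cast_nonneg _) (norm_nonneg _)]
  exact_mod_cast h.symm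

lemma card_mulChar_pow_eq_one_le [Finite F] [Fintype (MulChar F ℂ)] [DecidableEq (MulChar F ℂ)]
    {d : ℕ} (hd : 0 < d) : #{χ : MulChar F ℂ | χ ^ d = 1} ≤ d := by
  obtain ⟨e⟩ := MulChar.mulEquiv_units F ℂ
  have : IsCyclic (MulChar F ℂ) := isCyclic_of_surjective e.symm e.symm.surjective
  exact IsCyclic.card_pow_eq_one_le hd

lemma powerSum_eq_sum_gaussSum [Fintype F] [Fintype (MulChar F ℂ)] [DecidableEq (MulChar F ℂ)]
    {d : ℕ} (hd : 0 < d) {ψ : AddChar F ℂ} (hψ : ψ ≠ 1) :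
    powerSum d ψ = ∑ χ ∈ ({χ | χ ^ d = 1} : Finset (MulChar F ℂ)).erase 1, gaussSum χ ψ := by
  classical
  have sum_nonunits : ∑ x : F with ¬IsUnit x, ψ (x ^ d) = 1 := by
    rw [sum_filter]; simp [hd.ne']
  rw [powerSum, sum_eq_sum_units_add_sum_not_isUnit, sum_nonunits, sum_units_pow_eq_sum_gaussSum,
    ← add_sum_erase _ _ (show (1 : MulChar F ℂ) ∈ _ by simp), gaussSum_one_left hψ]
  ring

theorem norm_powerSum_le_sub_one_mul_sqrt [Fintype F] {d : ℕ} (hd : 0 < d) {ψ : AddChar F ℂ}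
    (hψ : ψ.IsPrimitive) : ‖powerSum d ψ‖ ≤ (d - 1) * √(Fintype.card F) := by
  classical
  have : Fintype (MulChar F ℂ) := .ofFinite _
  have hψ1 : ψ ≠ 1 := by simpa using hψ one_ne_zero
  rw [powerSum_eq_sum_gaussSum hd hψ1]
  set X : Finset (MulChar F ℂ) := {χ | χ ^ d = 1}
  have hX : (#(X.erase 1) : ℝ) ≤ d - 1 := by
    rw [card_erase_of_mem (by simp [X]), ← Nat.cast_pred hd]
    exact_mod_cast Nat.sub_le_sub_right (card_mulChar_pow_eq_one_le hd) 1
  calc ‖∑ χ ∈ X.erase 1, gaussSum χ ψ‖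
      ≤ ∑ χ ∈ X.erase 1, ‖gaussSum χ ψ‖ := norm_sum_le _ _
    _ = #(X.erase 1) * √(Fintype.card F) := by
        rw [sum_congr rfl fun χ hχ ↦ norm_gaussSum (ne_of_mem_erase hχ) hψ, sum_const,
          nsmul_eq_mul]
    _ ≤ (d - 1) * √(Fintype.card F) := by gcongr

end FiniteField

/-! ### Prime power moduli -/

lemma sum_range_natCast {M : Type*} [AddCommMonoid M] (n m : ℕ) [NeZero n] (f : ZMod n → M) :
    ∑ z ∈ range (n * m), f z = m • ∑ x, f x := by
  have sum_period : ∑ z ∈ range n, f z = ∑ x, f x :=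
    sum_nbij' (fun z ↦ (z : ZMod n)) ZMod.val (by simp)
      (fun x _ ↦ mem_range.2 x.val_lt) (fun z hz ↦ ZMod.val_cast_of_lt (mem_range.1 hz))
      (by simp) (by simp)
  induction m with
  | zero => simp
  | succ m ih =>
    rw [Nat.mul_succ, sum_range_add, ih, succ_nsmul]
    simp only [Nat.cast_add, Nat.cast_mul, ZMod.natCast_self, zero_mul, zero_add, sum_period]

lemma sum_Icc_natCast {M : Type*} [AddCommMonoid M] (n m : ℕ) [NeZero n] (f : ZMod n → M) :
    ∑ z ∈ Icc 1 (n * m), f z = m • ∑ x, f x := calc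
  _ = ∑ z ∈ range (n * m), f (z + 1) := by
    rw [range_eq_Ico, ← Ico_add_one_right_eq_Icc]
    simpa using (sum_Ico_add' (fun z : ℕ ↦ f z) 0 (n * m) 1).symm
  _ = m • ∑ x, f x := by
    rw [sum_range_natCast n m fun x ↦ f (x + 1)]
    exact congrArg _ (Equiv.sum_comp (Equiv.addRight 1) f)

lemma sum_not_isUnit_primePow {M : Type*} [AddCommMonoid M] {p l : ℕ} [Fact p.Prime]
    (hl : l ≠ 0) (f : ZMod (p ^ l) → M) :
    ∑ x with ¬IsUnit x, f x = ∑ z ∈ range (p ^ (l - 1)), f (p * z) := by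
  have hpl : p ^ l = p * p ^ (l - 1) := (mul_pow_sub_one hl p).symm
  have hp : 0 < p := (Fact.out : p.Prime).pos
  have isUnit_iff (n : ℕ) : ¬IsUnit (n : ZMod (p ^ l)) ↔ p ∣ n := by
    rw [ZMod.isUnit_iff_coprime, Nat.coprime_pow_right_iff hl.bot_lt, Nat.coprime_comm,
      Nat.Prime.coprime_iff_not_dvd Fact.out, not_not]
  symm
  refine sum_nbij (fun z ↦ ((p * z : ℕ) : ZMod (p ^ l))) (fun z _ ↦ ?_) (fun y hy z hz hyz ↦ ?_)
    (fun x hx ↦ ?_) (by simp)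
  · simpa using (isUnit_iff (p * z)).2 (dvd_mul_right p z)
  · have hmod : p * y % p ^ l = p * z % p ^ l := (ZMod.natCast_eq_natCast_iff' _ _ _).1 hyz
    rw [hpl, Nat.mul_mod_mul_left, Nat.mul_mod_mul_left, Nat.mod_eq_of_lt (mem_range.1 hy),
      Nat.mod_eq_of_lt (mem_range.1 hz)] at hmod
    exact Nat.eq_of_mul_eq_mul_left hp hmod
  · obtain ⟨z, hz⟩ := (isUnit_iff x.val).1 (by simpa using hx)
    refine ⟨z, mem_coe.2 (mem_range.2 (Nat.lt_of_mul_lt_mul_left (a := p) ?_)), ?_⟩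
    · rw [← hz, ← hpl]
      exact x.val_lt
    · exact (congrArg _ hz.symm).trans (ZMod.natCast_zmod_val x)

lemma exists_powerSum_eq_mul {a b : ℕ} [NeZero a] [NeZero b] (hab : a.Coprime b) (d : ℕ)
    {ψ : AddChar (ZMod (a * b)) ℂ} (hψ : ψ.IsPrimitive) :
    ∃ (ψ₁ : AddChar (ZMod a) ℂ) (ψ₂ : AddChar (ZMod b) ℂ), ψ₁.IsPrimitive ∧ ψ₂.IsPrimitive ∧
      powerSum d ψ = powerSum d ψ₁ * powerSum d ψ₂ := by
  let e := (ZMod.chineseRemainder hab).symm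
  refine ⟨ψ.compAddMonoidHom (e.toAddMonoidHom.comp (.inl _ _)),
    ψ.compAddMonoidHom (e.toAddMonoidHom.comp (.inr _ _)), ?_, ?_, ?_⟩
  · refine AddChar.zmod_char_primitive_of_eq_one_only_at_zero _ _ fun x hx ↦ ?_
    exact congrArg Prod.fst ((map_eq_zero_iff e e.injective).1 ((hψ.zmod_char_eq_one_iff _ _).1 hx))
  · refine AddChar.zmod_char_primitive_of_eq_one_only_at_zero _ _ fun x hx ↦ ?_
    exact congrArg Prod.snd ((map_eq_zero_iff e e.injective).1 ((hψ.zmod_char_eq_one_iff _ _).1 hx))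
  · simp only [powerSum]
    rw [← e.toEquiv.sum_comp, Fintype.sum_prod_type, sum_mul_sum]
    refine sum_congr rfl fun x _ ↦ sum_congr rfl fun y _ ↦ ?_
    have he : e (x, y) ^ d = e (x ^ d, 0) + e (0, y ^ d) := by simp [← map_pow, ← map_add]
    exact (congrArg ψ he).trans (ψ.map_add_eq_mul _ _)

lemma exists_isPrimitive_apply_natCast {q a b : ℕ} [NeZero q] [NeZero b] (hq : q = a * b)
    {ψ : AddChar (ZMod q) ℂ} (hψ : ψ.IsPrimitive) :
    ∃ ψ' : AddChar (ZMod b) ℂ, ψ'.IsPrimitive ∧ ∀ z : ℕ, ψ' z = ψ (a * z) := by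
  have hψ_pow (z : ℕ) : ψ a ^ z = ψ (a * z) := by
    rw [← AddChar.map_nsmul_eq_pow, nsmul_eq_mul, mul_comm]
  have hab : ψ a ^ b = 1 := by
    rw [hψ_pow, ← Nat.cast_mul, ← hq, ZMod.natCast_self, AddChar.map_zero_eq_one]
  refine ⟨AddChar.zmodChar b hab, ?_, fun z ↦ by rw [AddChar.zmodChar_apply', hψ_pow]⟩
  refine AddChar.zmod_char_primitive_of_eq_one_only_at_zero _ _ fun x hx ↦ ?_
  have ha : 0 < a := Nat.pos_of_ne_zero fun h ↦ NeZero.ne q (by rw [hq, h, zero_mul])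
  rw [AddChar.zmodChar_apply, hψ_pow, hψ.zmod_char_eq_one_iff, ← Nat.cast_mul,
    ZMod.natCast_eq_zero_iff, hq, Nat.mul_dvd_mul_iff_left ha] at hx
  rw [← ZMod.natCast_zmod_val x, ZMod.natCast_eq_zero_iff]
  exact hx

section PrimePower

variable {p d v l : ℕ} [Fact p.Prime] {ψ : AddChar (ZMod (p ^ l)) ℂ}

lemma powerSum_primePow_eq_sum_range (hψ : ψ.IsPrimitive) (hv : ¬p ^ (v + 1) ∣ d)
    (hl : 2 * v + 2 ≤ l) :
    powerSum d ψ = ∑ z ∈ range (p ^ (l - 1)), ψ ((p : ZMod (p ^ l)) ^ d * z ^ d) := by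
  have hN : ((p ^ (l - v - 1) : ℕ) : ZMod (p ^ l)) ^ 2 = 0 := by
    rw [← Nat.cast_pow, ZMod.natCast_eq_zero_iff, ← pow_mul]
    exact pow_dvd_pow p (by lia)
  have hdN : (d : ZMod (p ^ l)) * (p ^ (l - v - 1) : ℕ) ≠ 0 := by
    have hpl : p ^ l = p ^ (v + 1) * p ^ (l - v - 1) := by
      rw [← pow_add]
      congr 1
      lia
    rw [← Nat.cast_mul, Ne, ZMod.natCast_eq_zero_iff]
    intro h
    rw [hpl] at h
    exact hv (Nat.dvd_of_mul_dvd_mul_right (pow_pos (Fact.out : p.Prime).pos _) h)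
  rw [powerSum, sum_eq_sum_units_add_sum_not_isUnit, sum_units_pow_eq_zero hψ hN hdN, zero_add,
    sum_not_isUnit_primePow (by lia)]
  simp only [mul_pow]

lemma exists_powerSum_primePow_eq_mul (hψ : ψ.IsPrimitive) (hv : ¬p ^ (v + 1) ∣ d)
    (hl : 2 * v + 2 ≤ l) (hd : 0 < d) (hdl : d ≤ l) :
    ∃ ψ' : AddChar (ZMod (p ^ (l - d))) ℂ, ψ'.IsPrimitive ∧
      powerSum d ψ = p ^ (d - 1) * powerSum d ψ' := by
  have hpl : p ^ l = p ^ d * p ^ (l - d) := (pow_mul_pow_sub p hdl).symm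
  obtain ⟨ψ', hψ', hψψ'⟩ := exists_isPrimitive_apply_natCast hpl hψ
  refine ⟨ψ', hψ', ?_⟩
  calc powerSum d ψ
      = ∑ z ∈ range (p ^ (l - d) * p ^ (d - 1)), ψ' (z ^ d) := by
        rw [powerSum_primePow_eq_sum_range hψ hv hl, ← pow_add, show l - d + (d - 1) = l - 1 by lia]
        simpa using sum_congr rfl fun z _ ↦ (hψψ' (z ^ d)).symm
    _ = p ^ (d - 1) * powerSum d ψ' := by
        rw [sum_range_natCast _ _ fun x ↦ ψ' (x ^ d), nsmul_eq_mul, powerSum, Nat.cast_pow]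

lemma powerSum_primePow_eq_of_le (hψ : ψ.IsPrimitive) (hv : ¬p ^ (v + 1) ∣ d)
    (hl : 2 * v + 2 ≤ l) (hld : l ≤ d) : powerSum d ψ = p ^ (l - 1) := by
  have hpd : (p : ZMod (p ^ l)) ^ d = 0 := by
    rw [← Nat.cast_pow, ZMod.natCast_eq_zero_iff]
    exact pow_dvd_pow p hld
  simp [powerSum_primePow_eq_sum_range hψ hv hl, hpd]

end PrimePower

/-! ### The Hardy–Littlewood bound -/

lemma pow_rpow_one_sub_inv_natCast {x : ℝ} (hx : 0 ≤ x) {d : ℕ} (hd : 0 < d) :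
    (x ^ d) ^ (1 - (d : ℝ)⁻¹) = x ^ (d - 1) := by
  have hd' : (d : ℝ) ≠ 0 := Nat.cast_ne_zero.2 hd.ne'
  rw [← Real.rpow_natCast, ← Real.rpow_natCast, ← Real.rpow_mul hx, mul_one_sub,
    mul_inv_cancel₀ hd', Nat.cast_pred hd]

lemma sub_one_mul_sqrt_le_rpow {d : ℕ} (hd : 0 < d) {x : ℝ} (hx : (d : ℝ) ^ 6 ≤ x) :
    (d - 1) * √x ≤ x ^ (1 - (d : ℝ)⁻¹) := by
  have hx1 : 1 ≤ x := (one_le_pow₀ (Nat.one_le_cast.2 hd)).trans hx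
  have hx0 : 0 < x := one_pos.trans_le hx1
  obtain rfl | rfl | hd3 : d = 1 ∨ d = 2 ∨ 3 ≤ d := by lia
  · simp
  · rw [Real.sqrt_eq_rpow]
    norm_num
  · have hdx : (d : ℝ) ≤ x ^ (6 : ℝ)⁻¹ := by
      simpa using (Real.le_rpow_inv_iff_of_pos d.cast_nonneg hx0.le (by norm_num : (0 : ℝ) < 6)).2
        (by simpa using hx)
    have hd_inv : (d : ℝ)⁻¹ ≤ 3⁻¹ := by
      gcongr
      exact_mod_cast hd3
    calc (d - 1) * √x ≤ x ^ (6 : ℝ)⁻¹ * x ^ (1 / 2 : ℝ) := by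
          rw [Real.sqrt_eq_rpow]
          gcongr
          linarith
      _ = x ^ (1 - (3 : ℝ)⁻¹) := by
          rw [← Real.rpow_add hx0]
          norm_num
      _ ≤ x ^ (1 - (d : ℝ)⁻¹) := by gcongr

section PowerSumBound

/-- Every primitive additive character `ψ` modulo `q` has `|∑_x ψ(x ^ d)| ≤ K q ^ (1 - 1 / d)`. The
constant `K` is explicit because it is tracked prime by prime. -/
def PowerSumBound (d q : ℕ) [NeZero q] (K : ℝ) : Prop :=
  ∀ ψ : AddChar (ZMod q) ℂ, ψ.IsPrimitive →
    ‖powerSum d ψ‖ ≤ K * (q : ℝ) ^ (1 - (d : ℝ)⁻¹)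

variable {d p q v : ℕ} {K : ℝ}

lemma PowerSumBound.mono [NeZero q] {K' : ℝ} (h : PowerSumBound d q K) (hK : K ≤ K') :
    PowerSumBound d q K' := fun ψ hψ ↦
  (h ψ hψ).trans (by gcongr)

lemma PowerSumBound.mul {a b : ℕ} [NeZero a] [NeZero b] {K₁ K₂ : ℝ} (h₁ : PowerSumBound d a K₁)
    (h₂ : PowerSumBound d b K₂) (hab : a.Coprime b) : PowerSumBound d (a * b) (K₁ * K₂) := by
  intro ψ hψ
  obtain ⟨ψ₁, ψ₂, hψ₁, hψ₂, hψ_eq⟩ := exists_powerSum_eq_mul hab d hψ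
  calc ‖powerSum d ψ‖
      = ‖powerSum d ψ₁‖ * ‖powerSum d ψ₂‖ := by rw [hψ_eq, norm_mul]
    _ ≤ (K₁ * (a : ℝ) ^ (1 - (d : ℝ)⁻¹)) * (K₂ * (b : ℝ) ^ (1 - (d : ℝ)⁻¹)) :=
        mul_le_mul (h₁ ψ₁ hψ₁) (h₂ ψ₂ hψ₂) (norm_nonneg _) ((norm_nonneg _).trans (h₁ ψ₁ hψ₁))
    _ = K₁ * K₂ * ((a * b : ℕ) : ℝ) ^ (1 - (d : ℝ)⁻¹) := by
        rw [Nat.cast_mul, Real.mul_rpow a.cast_nonneg b.cast_nonneg]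
        ring

lemma powerSumBound_self (d q : ℕ) [NeZero q] : PowerSumBound d q q := by
  intro ψ _
  have hq : (1 : ℝ) ≤ q := Nat.one_le_cast.2 (NeZero.pos q)
  calc ‖powerSum d ψ‖ ≤ q := by simpa using norm_powerSum_le_card d ψ
    _ ≤ q * (q : ℝ) ^ (1 - (d : ℝ)⁻¹) :=
        le_mul_of_one_le_right q.cast_nonneg
          (Real.one_le_rpow hq (sub_nonneg.2 (Nat.cast_inv_le_one d)))

lemma powerSumBound_primePow_of_sub [Fact p.Prime] {l : ℕ} (hd : 0 < d) (hdl : d ≤ l)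
    (hv : ¬p ^ (v + 1) ∣ d) (hl : 2 * v + 2 ≤ l) (h : PowerSumBound d (p ^ (l - d)) K) :
    PowerSumBound d (p ^ l) K := by
  intro ψ hψ
  obtain ⟨ψ', hψ', hψ_eq⟩ := exists_powerSum_primePow_eq_mul hψ hv hl hd hdl
  calc ‖powerSum d ψ‖
      = p ^ (d - 1) * ‖powerSum d ψ'‖ := by simp [hψ_eq]
    _ ≤ p ^ (d - 1) * (K * ((p ^ (l - d) : ℕ) : ℝ) ^ (1 - (d : ℝ)⁻¹)) := by gcongr; exact h ψ' hψ'
    _ = K * ((p ^ l : ℕ) : ℝ) ^ (1 - (d : ℝ)⁻¹) := by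
        rw [← pow_mul_pow_sub p hdl, Nat.cast_mul, Real.mul_rpow (by positivity) (by positivity),
          Nat.cast_pow p d, pow_rpow_one_sub_inv_natCast p.cast_nonneg hd]
        ring

lemma powerSumBound_primePow_of_le [Fact p.Prime] {l : ℕ} (hld : l ≤ d)
    (hv : ¬p ^ (v + 1) ∣ d) (hl : 2 * v + 2 ≤ l) : PowerSumBound d (p ^ l) 1 := by
  intro ψ hψ
  have hl0 : 0 < l := by lia
  have hpl : (1 : ℝ) ≤ (p ^ l : ℕ) := Nat.one_le_cast.2 (NeZero.pos (p ^ l))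
  calc ‖powerSum d ψ‖
      = (p : ℝ) ^ (l - 1) := by simp [powerSum_primePow_eq_of_le hψ hv hl hld]
    _ = ((p ^ l : ℕ) : ℝ) ^ (1 - (l : ℝ)⁻¹) := by
        rw [Nat.cast_pow, pow_rpow_one_sub_inv_natCast p.cast_nonneg hl0]
    _ ≤ 1 * ((p ^ l : ℕ) : ℝ) ^ (1 - (d : ℝ)⁻¹) := by
        rw [one_mul]
        gcongr

lemma powerSumBound_primePow [Fact p.Prime] (hd : 0 < d) (hv : ¬p ^ (v + 1) ∣ d) (hK : 1 ≤ K)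
    (base : ∀ l ≤ 2 * v + 1, PowerSumBound d (p ^ l) K) (l : ℕ) : PowerSumBound d (p ^ l) K := by
  induction l using Nat.strong_induction_on with
  | _ l ih =>
    obtain hl | hl := Nat.lt_or_ge (2 * v + 1) l
    · obtain hdl | hld := le_total d l
      · exact powerSumBound_primePow_of_sub hd hdl hv hl (ih (l - d) (by lia))
      · exact (powerSumBound_primePow_of_le hld hv hl).mono hK
    · exact base l hl

lemma powerSumBound_prime [Fact p.Prime] (hd : 0 < d) (hdp : d ^ 6 ≤ p) :
    PowerSumBound d p 1 := by
  intro ψ hψ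
  calc ‖powerSum d ψ‖ ≤ (d - 1) * √p := by
        simpa using norm_powerSum_le_sub_one_mul_sqrt hd hψ
    _ ≤ 1 * (p : ℝ) ^ (1 - (d : ℝ)⁻¹) := by
        rw [one_mul]
        exact sub_one_mul_sqrt_le_rpow hd (by exact_mod_cast hdp)

/-- The constant that the powers of a prime `p` contribute to the Hardy–Littlewood bound for `d`-th
powers. For `p ≤ d ^ 6` it comes from the trivial bound modulo `p ^ l` for `l ≤ 2 * d + 1`. -/
def localConst (d p : ℕ) : ℕ := if p ≤ d ^ 6 then p ^ (2 * d + 1) else 1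

lemma powerSumBound_primePow_localConst [hp : Fact p.Prime] (hd : 0 < d) (l : ℕ) :
    PowerSumBound d (p ^ l) (localConst d p) := by
  rw [localConst]
  split_ifs with hpd
  · have hv : ¬p ^ (d + 1) ∣ d :=
      Nat.not_dvd_of_pos_of_lt hd ((Nat.lt_succ_self d).trans (Nat.lt_pow_self hp.out.one_lt))
    refine powerSumBound_primePow hd hv (mod_cast Nat.one_le_pow _ _ hp.out.pos) (fun l hl ↦ ?_) l
    exact (powerSumBound_self d _).mono (mod_cast Nat.pow_le_pow_right hp.out.pos hl)
  · have hv : ¬p ^ (0 + 1) ∣ d := by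
      rw [zero_add, pow_one]
      exact Nat.not_dvd_of_pos_of_lt hd ((Nat.le_self_pow (by simp) d).trans_lt (not_le.1 hpd))
    refine powerSumBound_primePow hd hv (mod_cast le_rfl) (fun l hl ↦ ?_) l
    obtain rfl | rfl : l = 0 ∨ l = 1 := by lia
    · simpa using powerSumBound_self d 1
    · simpa using powerSumBound_prime hd (not_le.1 hpd).le

lemma powerSumBound_prod_localConst (hd : 0 < d) :
    ∀ (q : ℕ) [NeZero q], PowerSumBound d q (∏ p ∈ q.primeFactors, localConst d p : ℕ) := by
  intro q
  induction q using Nat.recOnPosPrimePosCoprime with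
  | zero => intro h; exact absurd rfl h.out
  | one => simpa using @powerSumBound_self d 1
  | prime_pow p n hp hn =>
    intro _
    have : Fact p.Prime := ⟨hp⟩
    simpa [Nat.primeFactors_prime_pow hn.ne' hp] using powerSumBound_primePow_localConst hd n
  | coprime a b ha hb hab iha ihb =>
    intro _
    have : NeZero a := ⟨by lia⟩
    have : NeZero b := ⟨by lia⟩
    rw [hab.primeFactors_mul, prod_union hab.disjoint_primeFactors, Nat.cast_mul]
    exact iha.mul ihb hab

/-- The constant `C(d, 1)` of the Hardy–Littlewood bound for `d`-th powers: the product of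
`localConst d p` over the primes `p ≤ d ^ 6`. -/
def hardyLittlewoodConst (d : ℕ) : ℕ := primorial (d ^ 6) ^ (2 * d + 1)

lemma hardyLittlewoodConst_pos (d : ℕ) : 0 < hardyLittlewoodConst d :=
  pow_pos (primorial_pos _) _

lemma prod_localConst_le (d q : ℕ) :
    ∏ p ∈ q.primeFactors, localConst d p ≤ hardyLittlewoodConst d := by
  simp only [localConst, ← prod_filter, prod_pow]
  refine Nat.pow_le_pow_left (Nat.le_of_dvd (primorial_pos _) (prod_dvd_prod_of_subset _ _ _ ?_)) _
  intro p hp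
  obtain ⟨hpq, hpd⟩ := mem_filter.1 hp
  exact mem_filter.2 ⟨mem_range_succ_iff.2 hpd, Nat.prime_of_mem_primeFactors hpq⟩

lemma powerSumBound_hardyLittlewoodConst (hd : 0 < d) (q : ℕ) [NeZero q] :
    PowerSumBound d q (hardyLittlewoodConst d) :=
  (powerSumBound_prod_localConst hd q).mono (mod_cast prod_localConst_le d q)

end PowerSumBound

lemma eTwoPi_intCast_div (n : ℤ) (q : ℕ) [NeZero q] :
    eTwoPi ((n : ℝ) / q) = ZMod.stdAddChar (n : ZMod q) := by
  rw [eTwoPi, ZMod.stdAddChar_coe]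
  push_cast
  rw [mul_div_assoc]

lemma isPrimitive_mulShift_of_isUnit {R R' : Type*} [CommRing R] [CommMonoid R']
    {ψ : AddChar R R'} (hψ : ψ.IsPrimitive) {c : R} (hc : IsUnit c) :
    (ψ.mulShift c).IsPrimitive := by
  intro a ha
  rw [AddChar.mulShift_mulShift]
  exact hψ (hc.mul_right_eq_zero.not.2 ha)

lemma sum_Icc_eTwoPi_eq_mul_powerSum (d : ℕ) (c : ℤ) (r g : ℕ) [NeZero r] [NeZero g] :
    ∑ x ∈ Icc 1 (r * g), eTwoPi ((c * g : ℤ) * x ^ d / (r * g : ℕ)) =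
      g * powerSum d (ZMod.stdAddChar.mulShift (c : ZMod r)) := calc
  _ = ∑ x ∈ Icc 1 (r * g), ZMod.stdAddChar.mulShift (c : ZMod r) (x ^ d) := by
    refine sum_congr rfl fun x _ ↦ ?_
    have hg : (g : ℝ) ≠ 0 := NeZero.ne _
    have cancel : ((c * g : ℤ) : ℝ) * x ^ d / (r * g : ℕ) = (c * x ^ d : ℤ) / r := by
      push_cast
      field_simp
    rw [cancel, eTwoPi_intCast_div, AddChar.mulShift_apply]
    push_cast
    rfl
  _ = g * powerSum d (ZMod.stdAddChar.mulShift (c : ZMod r)) := by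
    rw [sum_Icc_natCast r g fun x ↦ ZMod.stdAddChar.mulShift (c : ZMod r) (x ^ d), nsmul_eq_mul,
      powerSum]

theorem norm_sum_Icc_eTwoPi_le {d q : ℕ} (hd : 0 < d) (hq : 0 < q) (b : ℤ) :
    ‖∑ x ∈ Icc 1 q, eTwoPi (b * x ^ d / q)‖ ≤
      hardyLittlewoodConst d * (q : ℝ) ^ (1 - (d : ℝ)⁻¹) * (Int.gcd b q : ℝ) ^ (d : ℝ)⁻¹ := by
  have hg : 0 < Int.gcd b q := Int.gcd_pos_of_ne_zero_right b (by exact_mod_cast hq.ne')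
  obtain ⟨c, r', hcr, hb, hr'⟩ := Int.exists_gcd_one hg
  generalize Int.gcd b q = g at hg hb hr' ⊢
  lift r' to ℕ using nonneg_of_mul_nonneg_left (hr' ▸ Int.natCast_nonneg q) (mod_cast hg) with r
  obtain rfl : q = r * g := mod_cast hr'
  subst hb
  have : NeZero r := ⟨left_ne_zero_of_mul hq.ne'⟩
  have : NeZero g := ⟨hg.ne'⟩
  have hc : IsUnit (c : ZMod r) :=
    (ZMod.coe_int_isUnit_iff_isCoprime c r).2 (Int.isCoprime_iff_gcd_eq_one.2 hcr).symm
  have hψ := isPrimitive_mulShift_of_isUnit (ZMod.isPrimitive_stdAddChar r) hc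
  calc _ = (g : ℝ) * ‖powerSum d (ZMod.stdAddChar.mulShift (c : ZMod r))‖ := by
        rw [sum_Icc_eTwoPi_eq_mul_powerSum, norm_mul, Complex.norm_natCast]
    _ ≤ g * (hardyLittlewoodConst d * (r : ℝ) ^ (1 - (d : ℝ)⁻¹)) := by
        gcongr
        exact powerSumBound_hardyLittlewoodConst hd r _ hψ
    _ = hardyLittlewoodConst d * ((r * g : ℕ) : ℝ) ^ (1 - (d : ℝ)⁻¹) * (g : ℝ) ^ (d : ℝ)⁻¹ := by
        have hg_split : (g : ℝ) = (g : ℝ) ^ (1 - (d : ℝ)⁻¹) * (g : ℝ) ^ (d : ℝ)⁻¹ := by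
          rw [← Real.rpow_add (by positivity), sub_add_cancel, Real.rpow_one]
        rw [Nat.cast_mul, Real.mul_rpow r.cast_nonneg g.cast_nonneg]
        nth_rw 1 [hg_split]
        ring

/-! ### Conditioning on all variables but one -/

lemma gcd_mul_pow_rpow_inv_le {d q : ℕ} (hd : 0 < d) (hq : 0 < q) {a : ℤ} (ha : Int.gcd a q = 1)
    (y : ℕ) : (Int.gcd (a * y ^ d) q : ℝ) ^ (d : ℝ)⁻¹ ≤ Nat.gcd q y := by
  have hgcd : Int.gcd (a * y ^ d) q = Nat.gcd q (y ^ d) := by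
    have ha' : a.natAbs.Coprime q := ha
    rw [Int.gcd_def, Int.natAbs_mul, Int.natAbs_pow, Int.natAbs_natCast, Int.natAbs_natCast,
      ha'.gcd_mul_left_cancel, Nat.gcd_comm]
  have hle : Nat.gcd q (y ^ d) ≤ Nat.gcd q y ^ d :=
    Nat.le_of_dvd (pow_pos (Nat.gcd_pos_of_pos_left _ hq) _) gcd_pow_right_dvd_pow_gcd
  calc _ ≤ ((Nat.gcd q y : ℝ) ^ d) ^ (d : ℝ)⁻¹ := by
        rw [hgcd]
        gcongr
        exact_mod_cast hle
    _ = Nat.gcd q y := Real.pow_rpow_inv_natCast (Nat.cast_nonneg _) hd.ne'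

lemma gcd_prod_dvd_prod_gcd {ι : Type*} (s : Finset ι) (q : ℕ) (y : ι → ℕ) :
    Nat.gcd q (∏ i ∈ s, y i) ∣ ∏ i ∈ s, Nat.gcd q (y i) := by
  classical
  induction s using Finset.induction_on with
  | empty => simp
  | insert i s hi ih =>
    rw [prod_insert hi, prod_insert hi]
    exact (Nat.gcd_mul_right_dvd_mul_gcd _ _ _).trans (Nat.mul_dvd_mul_left _ ih)

lemma sum_gcd_le (q : ℕ) : ∑ t ∈ Icc 1 q, Nat.gcd q t ≤ q * #q.divisors := by
  obtain rfl | hq := q.eq_zero_or_pos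
  · simp
  calc ∑ t ∈ Icc 1 q, Nat.gcd q t
      ≤ ∑ t ∈ Icc 1 q, ∑ g ∈ q.divisors with g ∣ t, g := by
        refine sum_le_sum fun t _ ↦ single_le_sum (f := fun g ↦ g) (fun _ _ ↦ Nat.zero_le _) ?_
        simp [Nat.gcd_dvd_left, Nat.gcd_dvd_right, hq.ne']
    _ = ∑ g ∈ q.divisors, #{t ∈ Ioc 0 q | g ∣ t} * g := by
        simp only [sum_filter, card_filter, sum_mul, ite_mul, one_mul, zero_mul]
        exact sum_comm
    _ = ∑ _g ∈ q.divisors, q := by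
        refine sum_congr rfl fun g hg ↦ ?_
        rw [Nat.Ioc_filter_dvd_card_eq_div, Nat.div_mul_cancel (Nat.dvd_of_mem_divisors hg)]
    _ = q * #q.divisors := by rw [sum_const, smul_eq_mul, mul_comm]

lemma sum_piFinset_const_succ {α M : Type*} [AddCommMonoid M] (n : ℕ) (s : Finset α)
    (f : (Fin (n + 1) → α) → M) :
    ∑ x ∈ Fintype.piFinset fun _ ↦ s, f x =
      ∑ y ∈ Fintype.piFinset fun _ : Fin n ↦ s, ∑ t ∈ s, f (Fin.cons t y : Fin (n + 1) → α) := by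
  rw [sum_comm, ← sum_product']
  refine (sum_equiv (Fin.consEquiv fun _ ↦ α) (fun z ↦ ?_) fun _ _ ↦ rfl).symm
  simp [Fin.consEquiv, Fin.forall_fin_succ]

lemma norm_sum_Icc_eTwoPi_mul_le {d q : ℕ} (hd : 0 < d) (hq : 0 < q) {a : ℤ}
    (ha : Int.gcd a q = 1) (y : ℕ) :
    ‖∑ t ∈ Icc 1 q, eTwoPi (a * (t * y) ^ d / q)‖ ≤
      hardyLittlewoodConst d * (q : ℝ) ^ (1 - (d : ℝ)⁻¹) * Nat.gcd q y := by
  have h := norm_sum_Icc_eTwoPi_le hd hq (a * y ^ d)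
  have comm (t : ℕ) : ((a * y ^ d : ℤ) : ℝ) * t ^ d = a * (t * y) ^ d := by push_cast; ring
  simp only [comm] at h
  exact h.trans (by gcongr; exact gcd_mul_pow_rpow_inv_le hd hq ha y)

theorem norm_sWeyl_succ_le {d q : ℕ} (hd : 0 < d) (hq : 0 < q) {a : ℤ} (ha : Int.gcd a q = 1)
    (n : ℕ) : ‖SWeyl d (n + 1) q a‖ ≤
      hardyLittlewoodConst d * (q : ℝ) ^ (1 - (d : ℝ)⁻¹) * (q * #q.divisors) ^ n := by
  set E : ℝ := hardyLittlewoodConst d * (q : ℝ) ^ (1 - (d : ℝ)⁻¹)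
  have inner_le (y : Fin n → ℕ) :
      ‖∑ t ∈ Icc 1 q, eTwoPi (a * (t * ∏ i, (y i : ℝ)) ^ d / q)‖ ≤
        E * ∏ i, (Nat.gcd q (y i) : ℝ) := by
    have hdvd := gcd_prod_dvd_prod_gcd univ q y
    have hpos : 0 < ∏ i, Nat.gcd q (y i) := prod_pos fun i _ ↦ Nat.gcd_pos_of_pos_left _ hq
    have h := norm_sum_Icc_eTwoPi_mul_le hd hq ha (∏ i, y i)
    push_cast at h
    refine h.trans ?_
    gcongr
    exact_mod_cast Nat.le_of_dvd hpos hdvd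
  calc ‖SWeyl d (n + 1) q a‖
      = ‖∑ y ∈ Fintype.piFinset fun _ : Fin n ↦ Icc 1 q,
          ∑ t ∈ Icc 1 q, eTwoPi (a * (t * ∏ i, (y i : ℝ)) ^ d / q)‖ := by
        simp only [SWeyl, sum_piFinset_const_succ, Fin.prod_univ_succ, Fin.cons_zero, Fin.cons_succ]
    _ ≤ ∑ y ∈ Fintype.piFinset fun _ : Fin n ↦ Icc 1 q, E * ∏ i, (Nat.gcd q (y i) : ℝ) :=
        (norm_sum_le _ _).trans (sum_le_sum fun y _ ↦ inner_le y)
    _ = E * (∑ t ∈ Icc 1 q, (Nat.gcd q t : ℝ)) ^ n := by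
        rw [← mul_sum, sum_prod_piFinset (Icc 1 q) fun _ t ↦ (Nat.gcd q t : ℝ), prod_const,
          card_univ, Fintype.card_fin]
    _ ≤ E * (q * #q.divisors) ^ n := by
        gcongr
        exact_mod_cast sum_gcd_le q

end WeylSum

/-- For `(a,q)=1`, `|q^{-k} S_k(q,a)| ≤ C(d,k) τ(q)^{k-1} q^{-1/d}`. -/
theorem stmt_8 (d k : ℕ) (hd : 1 ≤ d) (hk : 1 ≤ k) :
    ∃ C : ℝ, 0 < C ∧ ∀ (q : ℕ), 0 < q → ∀ a : ℤ, Int.gcd a q = 1 →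
      ‖(q : ℂ) ^ (-(k : ℤ)) * SWeyl d k q a‖ ≤
        C * (q.divisors.card : ℝ) ^ (k - 1) * (q : ℝ) ^ (-(1 : ℝ) / d) := by
  obtain ⟨n, rfl⟩ := Nat.exists_eq_add_of_le' hk
  refine ⟨WeylSum.hardyLittlewoodConst d, mod_cast WeylSum.hardyLittlewoodConst_pos d, ?_⟩
  intro q hq a ha
  have hq0 : (0 : ℝ) < q := Nat.cast_pos.2 hq
  have hrpow : (q : ℝ) ^ (1 - (d : ℝ)⁻¹) = q * (q : ℝ) ^ (-(1 : ℝ) / d) := by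
    rw [sub_eq_add_neg, Real.rpow_add hq0, Real.rpow_one, neg_div, one_div]
  rw [norm_mul, norm_zpow, Complex.norm_natCast, zpow_neg, zpow_natCast, Nat.add_sub_cancel,
    inv_mul_le_iff₀ (by positivity)]
  calc ‖SWeyl d (n + 1) q a‖
      ≤ WeylSum.hardyLittlewoodConst d * (q : ℝ) ^ (1 - (d : ℝ)⁻¹) * (q * q.divisors.card) ^ n :=
        WeylSum.norm_sWeyl_succ_le hd hq ha n
    _ = q ^ (n + 1) * (WeylSum.hardyLittlewoodConst d * q.divisors.card ^ n *
          (q : ℝ) ^ (-(1 : ℝ) / d)) := by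
        rw [hrpow]
        ring
end
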